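/- arXiv:math-ph/0306051 — 4 statements merged into one kernel-verified Lean document; each statement's English description precedes it below -/
import Mathlib

section
/- Let d ≥ 1, 0 < μ < 2, ε₁ > 0, 0 < ε₂ < 2 − μ, and R > 0. Let V₁ be real-valued and differentiable on {x ∈ ℝ^d : |x| > R} with V₁(x) ≤ −ε₁⟨x⟩^{−μ} and −x·∇V₁(x) ≥ (2−ε₂)V₁(x) for all |x| > R. Let χ₊ ∈ C^∞(ℝ) be nondecreasing with χ₊ = 0 on (−∞,1] and χ₊ = 1 on [2,∞), and set χ₋ = 1 − χ₊. For n > R define Ṽ₁(x) = χ₊(|x|/n)V₁(x) − ε₁⟨x⟩^{−μ}χ₋(|x|/n). Then Ṽ₁ is differentiable on all of ℝ^d and satisfies, for every x ∈ ℝ^d: (a) Ṽ₁(x) ≤ −ε₁⟨x⟩^{−μ}, and (b) −x·∇Ṽ₁(x) ≥ (2−ε₂)Ṽ₁(x). -/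
open Real

noncomputable section

/-- The Japanese bracket `⟨x⟩ = (1+|x|²)^{1/2}`. -/
def jap {d : ℕ} (x : EuclideanSpace ℝ (Fin d)) : ℝ := Real.sqrt (1 + ‖x‖ ^ 2)

/-- The modified potential `Ṽ₁ = χ₊(|x|/n) V₁ - ε₁⟨x⟩^{-μ} χ₋(|x|/n)`, `χ₋ = 1 - χ₊`. -/
def tildeV {d : ℕ} (μ ε₁ n : ℝ) (χp : ℝ → ℝ) (V₁ : EuclideanSpace ℝ (Fin d) → ℝ)
    (x : EuclideanSpace ℝ (Fin d)) : ℝ :=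
  χp (‖x‖ / n) * V₁ x - ε₁ * jap x ^ (-μ) * (1 - χp (‖x‖ / n))

lemma wpot_hasFDerivAt {d : ℕ} (μ ε₁ : ℝ) (x : EuclideanSpace ℝ (Fin d)) :
    ∃ L : EuclideanSpace ℝ (Fin d) →L[ℝ] ℝ,
      HasFDerivAt (fun y : EuclideanSpace ℝ (Fin d) => -ε₁ * jap y ^ (-μ)) L x ∧
      L x = ε₁ * μ * (jap x ^ (-μ) * (‖x‖ ^ 2 / (1 + ‖x‖ ^ 2))) := by
  have hpos : ∀ y : EuclideanSpace ℝ (Fin d), 0 < 1 + ‖y‖ ^ 2 := fun y => by positivity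
  have hj : ∀ y : EuclideanSpace ℝ (Fin d), jap y ^ (-μ) = (1 + ‖y‖ ^ 2) ^ (-μ / 2) := by
    intro y
    rw [jap, Real.sqrt_eq_rpow, ← Real.rpow_mul (hpos y).le]
    congr 1
    ring
  have h1 := ((hasStrictFDerivAt_norm_sq x).hasFDerivAt.const_add (1 : ℝ))
  have h2 := (h1.rpow_const (p := -μ / 2) (Or.inl (hpos x).ne')).const_mul (-ε₁)
  refine ⟨_, h2.congr_of_eventuallyEq (Filter.Eventually.of_forall fun y => ?_), ?_⟩
  · simp only [hj]
  · rw [hj, Real.rpow_sub_one (hpos x).ne']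
    simp
    field_simp

/-- The negativity and positive-virial conditions imposed near infinity can be arranged
globally by a smooth cutoff modification inside a large ball. -/
theorem stmt_4 (d : ℕ) (hd : 1 ≤ d) (μ ε₁ ε₂ R : ℝ)
    (hμ0 : 0 < μ) (hμ2 : μ < 2) (hε₁ : 0 < ε₁) (hε₂0 : 0 < ε₂) (hε₂ : ε₂ < 2 - μ)
    (hR : 0 < R)
    (V₁ : EuclideanSpace ℝ (Fin d) → ℝ)
    (hV₁diff : ∀ x : EuclideanSpace ℝ (Fin d), R < ‖x‖ → DifferentiableAt ℝ V₁ x)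
    (hV₁neg : ∀ x : EuclideanSpace ℝ (Fin d), R < ‖x‖ → V₁ x ≤ -ε₁ * jap x ^ (-μ))
    (hvir : ∀ x : EuclideanSpace ℝ (Fin d), R < ‖x‖ →
      -(fderiv ℝ V₁ x x) ≥ (2 - ε₂) * V₁ x)
    (χp : ℝ → ℝ) (hχsmooth : ContDiff ℝ (⊤ : ℕ∞) χp) (hχmono : Monotone χp)
    (hχ0 : ∀ t : ℝ, t ≤ 1 → χp t = 0) (hχ1 : ∀ t : ℝ, 2 ≤ t → χp t = 1)
    (n : ℝ) (hn : R < n) :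
    Differentiable ℝ (tildeV μ ε₁ n χp V₁) ∧
    ∀ x : EuclideanSpace ℝ (Fin d),
      (tildeV μ ε₁ n χp V₁ x ≤ -ε₁ * jap x ^ (-μ)) ∧
      (-(fderiv ℝ (tildeV μ ε₁ n χp V₁) x x) ≥ (2 - ε₂) * tildeV μ ε₁ n χp V₁ x) := by
  have hn0 : 0 < n := hR.trans hn
  have hjpos : ∀ x : EuclideanSpace ℝ (Fin d), 0 < jap x ^ (-μ) := fun x => by
    unfold jap
    positivity
  have hχ_nonneg : ∀ t, 0 ≤ χp t := fun t => by
    rw [← hχ0 (min t 1) (min_le_right _ _)]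
    exact hχmono (min_le_left _ _)
  have hχ_le : ∀ t, χp t ≤ 1 := fun t => by
    rw [← hχ1 (max t 2) (le_max_right _ _)]
    exact hχmono (le_max_left _ _)
  have hWvir : ∀ x : EuclideanSpace ℝ (Fin d),
      ε₁ * μ * (jap x ^ (-μ) * (‖x‖ ^ 2 / (1 + ‖x‖ ^ 2)))
        ≤ (2 - ε₂) * (ε₁ * jap x ^ (-μ)) := by
    intro x
    have h1 : ‖x‖ ^ 2 / (1 + ‖x‖ ^ 2) ≤ 1 := by
      rw [div_le_one (by positivity)]
      linarith
    have h2 := hjpos x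
    have h3 : 0 < ε₁ * jap x ^ (-μ) := by positivity
    calc ε₁ * μ * (jap x ^ (-μ) * (‖x‖ ^ 2 / (1 + ‖x‖ ^ 2)))
        = μ * (ε₁ * jap x ^ (-μ)) * (‖x‖ ^ 2 / (1 + ‖x‖ ^ 2)) := by ring
      _ ≤ μ * (ε₁ * jap x ^ (-μ)) * 1 := by gcongr
      _ ≤ (2 - ε₂) * (ε₁ * jap x ^ (-μ)) := by
        rw [mul_one]
        gcongr
        linarith
  have key : ∀ x : EuclideanSpace ℝ (Fin d), ∃ L : EuclideanSpace ℝ (Fin d) →L[ℝ] ℝ,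
      HasFDerivAt (tildeV μ ε₁ n χp V₁) L x ∧ (tildeV μ ε₁ n χp V₁ x ≤ -ε₁ * jap x ^ (-μ)) ∧
      -(L x) ≥ (2 - ε₂) * tildeV μ ε₁ n χp V₁ x := by
    intro x
    obtain ⟨L, hL, hLx⟩ := wpot_hasFDerivAt μ ε₁ x
    have hw := hWvir x
    rcases lt_or_ge ‖x‖ n with hx | hx
    · have heq : ∀ y : EuclideanSpace ℝ (Fin d), ‖y‖ < n →
          tildeV μ ε₁ n χp V₁ y = -ε₁ * jap y ^ (-μ) := by
        intro y hy
        rw [tildeV, hχ0 _ ((div_le_one hn0).2 hy.le)]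
        ring
      refine ⟨L, hL.congr_of_eventuallyEq ?_, (heq x hx).le, ?_⟩
      · filter_upwards [(isOpen_lt continuous_norm continuous_const).mem_nhds hx] with y hy
        exact heq y hy
      · rw [heq x hx, hLx]
        linarith
    · have hxR : R < ‖x‖ := hn.trans_le hx
      have hx0 : x ≠ 0 := norm_pos_iff.1 (hR.trans hxR)
      have hN : HasFDerivAt (fun y : EuclideanSpace ℝ (Fin d) => ‖y‖)
          (fderiv ℝ (fun y : EuclideanSpace ℝ (Fin d) => ‖y‖) x) x :=
        ((contDiffAt_norm ℝ hx0 (n := 1)).differentiableAt (by simp)).hasFDerivAt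
      have hNx : fderiv ℝ (fun y : EuclideanSpace ℝ (Fin d) => ‖y‖) x x = ‖x‖ :=
        DifferentiableAt.fderiv_norm_self hN.differentiableAt
      have hχd : HasDerivAt χp (deriv χp (‖x‖ / n)) (‖x‖ / n) :=
        ((hχsmooth.differentiable (by simp)) _).hasDerivAt
      have hχ' : 0 ≤ deriv χp (‖x‖ / n) := hχmono.deriv_nonneg
      have hc := hχd.comp_hasFDerivAt x (hN.mul_const n⁻¹)
      have hV := (hV₁diff x hxR).hasFDerivAt
      have hT := (hc.mul (hV.sub hL)).add hL
      have hneg := hV₁neg x hxR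
      have hv := hvir x hxR
      have ha := hχ_nonneg (‖x‖ / n)
      have hb := hχ_le (‖x‖ / n)
      refine ⟨_, hT.congr_of_eventuallyEq (Filter.Eventually.of_forall fun y => ?_), ?_, ?_⟩
      · simp [tildeV, div_eq_mul_inv]
        ring
      · rw [tildeV]
        nlinarith
      · have hd1 : 0 ≤ (deriv χp (‖x‖ / n) * (‖x‖ * n⁻¹)) * (-ε₁ * jap x ^ (-μ) - V₁ x) :=
          mul_nonneg (by positivity) (by linarith)
        have hd2 := mul_nonneg ha (sub_nonneg.2 hv)
        have hd3 := mul_nonneg (sub_nonneg.2 hb) (sub_nonneg.2 hw)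
        simp [tildeV, hNx, hLx, ← div_eq_mul_inv] at hd1 hd2 hd3 ⊢
        ring_nf at hd1 hd2 hd3 ⊢
        linarith
  refine ⟨fun x => ?_, fun x => ?_⟩
  · obtain ⟨L, hL, -⟩ := key x
    exact hL.differentiableAt
  · obtain ⟨L, hL, h1, h2⟩ := key x
    rw [hL.fderiv]
    exact ⟨h1, h2⟩
end
end

section
/- Let d ≥ 1, 0 < μ < 2, κ₀ > 0, and for E ∈ (0,1] define the metric g_{E,(x,ξ)}(v_x, v_ξ) = |v_x|²/⟨x⟩² + |v_ξ|²/f_E(x)² on ℝ^d × ℝ^d. Then there exists a constant C₁ > 0, independent of E ∈ (0,1], such that g_E is slowly varying uniformly in E: for all E ∈ (0,1], all (x,ξ), (y,η) ∈ ℝ^d × ℝ^d with g_{E,(x,ξ)}(y,η) ≤ 1/C₁, and all (v_x, v_ξ) ∈ ℝ^d × ℝ^d, one has g_{E,(x+y, ξ+η)}(v_x, v_ξ) ≤ C₁ · g_{E,(x,ξ)}(v_x, v_ξ). -/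
open Real

noncomputable section

/-- The energy-dependent weight `f_E(x) = (κ₀^{-2}E + (1-μ/2)^{-1}⟨x⟩^{-μ})^{1/2}`. -/
def fE {d : ℕ} (μ κ₀ E : ℝ) (x : EuclideanSpace ℝ (Fin d)) : ℝ :=
  Real.sqrt ((κ₀ ^ 2)⁻¹ * E + (1 - μ/2)⁻¹ * jap x ^ (-μ))

/-- The Hörmander metric `g_{E,(x,ξ)}(v_x,v_ξ) = |v_x|²/⟨x⟩² + |v_ξ|²/f_E(x)²`
(it depends on the base point only through `x`). -/
def gMet {d : ℕ} (μ κ₀ E : ℝ) (x vx vξ : EuclideanSpace ℝ (Fin d)) : ℝ :=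
  ‖vx‖ ^ 2 / jap x ^ 2 + ‖vξ‖ ^ 2 / fE μ κ₀ E x ^ 2

/-- The metric `g_E` is slowly varying uniformly in `E ∈ (0,1]` (Lemma 4.3 (i)). -/
theorem stmt_12 (d : ℕ) (hd : 1 ≤ d) (μ κ₀ : ℝ)
    (hμ0 : 0 < μ) (hμ2 : μ < 2) (hκ₀ : 0 < κ₀) :
    ∃ C₁ > (0:ℝ), ∀ E ∈ Set.Ioc (0:ℝ) 1,
      ∀ x ξ y η vx vξ : EuclideanSpace ℝ (Fin d),
        gMet μ κ₀ E x y η ≤ 1 / C₁ →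
        gMet μ κ₀ E (x + y) vx vξ ≤ C₁ * gMet μ κ₀ E x vx vξ := by
  refine ⟨4, by norm_num, ?_⟩
  rintro E ⟨hE0, hE1⟩ x ξ y η vx vξ h
  have hj : ∀ z : EuclideanSpace ℝ (Fin d), jap z ^ 2 = 1 + ‖z‖ ^ 2 := fun z =>
    Real.sq_sqrt (by positivity)
  have hjp : ∀ z : EuclideanSpace ℝ (Fin d), 0 < jap z := fun z =>
    Real.sqrt_pos.2 (by positivity)
  have hm : 0 < (1 - μ / 2)⁻¹ := inv_pos.2 (by linarith)
  have hF : ∀ z : EuclideanSpace ℝ (Fin d),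
      fE μ κ₀ E z ^ 2 = (κ₀ ^ 2)⁻¹ * E + (1 - μ/2)⁻¹ * jap z ^ (-μ) := fun z => by
    have := Real.rpow_pos_of_pos (hjp z) (-μ)
    exact Real.sq_sqrt (by positivity)
  have hFp : ∀ z : EuclideanSpace ℝ (Fin d), 0 < fE μ κ₀ E z ^ 2 := fun z => by
    have := Real.rpow_pos_of_pos (hjp z) (-μ)
    rw [hF]; positivity
  have hy : ‖y‖ ^ 2 ≤ jap x ^ 2 / 4 := by
    have h1 : ‖y‖ ^ 2 / jap x ^ 2 ≤ 1 / 4 := by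
      have h2 : 0 ≤ ‖η‖ ^ 2 / fE μ κ₀ E x ^ 2 := by positivity
      unfold gMet at h
      linarith
    rw [div_le_iff₀ (pow_pos (hjp x) 2)] at h1
    linarith
  have hsub : ‖x‖ ≤ ‖x + y‖ + ‖y‖ := by
    simpa using norm_sub_le (x + y) y
  have hadd : ‖x + y‖ ≤ ‖x‖ + ‖y‖ := norm_add_le x y
  have hx0 := norm_nonneg x
  have hxy0 := norm_nonneg (x + y)
  have hA : jap x ^ 2 ≤ 4 * jap (x + y) ^ 2 := by
    have h3 : ‖x‖ ^ 2 ≤ (‖x + y‖ + ‖y‖) ^ 2 := by gcongr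
    have := hj x
    have := hj (x + y)
    nlinarith [sq_nonneg (‖x + y‖ - ‖y‖)]
  have hB : jap (x + y) ≤ 2 * jap x := by
    have h3 : ‖x + y‖ ^ 2 ≤ (‖x‖ + ‖y‖) ^ 2 := by gcongr
    have := hj x
    have := hj (x + y)
    refine (pow_le_pow_iff_left₀ (hjp _).le (by linarith [hjp x]) two_ne_zero).1 ?_
    nlinarith [sq_nonneg (‖x‖ - ‖y‖)]
  have hP : jap x ^ (-μ) ≤ 4 * jap (x + y) ^ (-μ) := by
    have h4 : (2 * jap x) ^ (-μ) ≤ jap (x + y) ^ (-μ) :=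
      Real.rpow_le_rpow_of_nonpos (hjp _) hB (by linarith)
    rw [Real.mul_rpow (by norm_num) (hjp x).le] at h4
    have h5 : (2:ℝ) ^ (-2:ℝ) ≤ 2 ^ (-μ) :=
      Real.rpow_le_rpow_of_exponent_le (by norm_num) (by linarith)
    have h6 : (2:ℝ) ^ (-2:ℝ) = 1 / 4 := by
      rw [Real.rpow_neg (by norm_num)]; norm_num
    have := Real.rpow_pos_of_pos (hjp x) (-μ)
    rw [h6] at h5
    nlinarith
  have hG : fE μ κ₀ E x ^ 2 ≤ 4 * fE μ κ₀ E (x + y) ^ 2 := by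
    rw [hF, hF]
    have : 0 ≤ (κ₀ ^ 2)⁻¹ * E := by positivity
    nlinarith [mul_le_mul_of_nonneg_left hP hm.le]
  have key : ∀ a b c : ℝ, 0 ≤ a → 0 < b → 0 < c → b ≤ 4 * c → a / c ≤ 4 * (a / b) := by
    intro a b c ha hb hc hbc
    rw [← mul_div_assoc, div_le_div_iff₀ hc hb]
    nlinarith
  unfold gMet
  rw [mul_add]
  exact add_le_add
    (key _ _ _ (by positivity) (pow_pos (hjp _) 2) (pow_pos (hjp _) 2) hA)
    (key _ _ _ (by positivity) (hFp _) (hFp _) hG)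
end
end

section
/- Let d ≥ 1, 0 < μ < 2, κ₀ > 0. Then there exist constants C₂, N > 0, independent of E ∈ (0,1], such that the metric g_E is temperate uniformly in E: for all E ∈ (0,1], all (x,ξ), (y,η) ∈ ℝ^d × ℝ^d and all (v_x, v_ξ) ∈ ℝ^d × ℝ^d, one has |v_x|²/⟨x⟩² + |v_ξ|²/f_E(x)² ≤ C₂ ( |v_x|²/⟨y⟩² + |v_ξ|²/f_E(y)² ) ( 1 + f_E(x)²|y−x|² + ⟨x⟩²|η−ξ|² )^N. -/
open Real

noncomputable section

theorem jap_aux {d : ℕ} (x y : EuclideanSpace ℝ (Fin d)) :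
    jap y ^ 2 ≤ 2 * jap x ^ 2 + 2 * ‖y - x‖ ^ 2 := by
  unfold jap
  rw [Real.sq_sqrt (by positivity), Real.sq_sqrt (by positivity)]
  have h : ‖y‖ ≤ ‖x‖ + ‖y - x‖ := by
    have := norm_add_le x (y - x)
    simpa using this
  have h2 : ‖y‖ ^ 2 ≤ (‖x‖ + ‖y - x‖) ^ 2 := by gcongr
  nlinarith [sq_nonneg (‖x‖ - ‖y - x‖)]

theorem one_le_jap {d : ℕ} (x : EuclideanSpace ℝ (Fin d)) : 1 ≤ jap x := by
  unfold jap
  rw [Real.one_le_sqrt]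
  nlinarith [sq_nonneg ‖x‖]

/-- The scalar core of the estimate. -/
theorem core_aux (μ a b r e c W : ℝ) (hμ0 : 0 < μ) (hμ2 : μ < 2) (ha : 1 ≤ a) (hb : 1 ≤ b)
    (hr : 0 ≤ r) (he : 0 ≤ e) (hc : 1 ≤ c)
    (h1 : b ^ 2 ≤ 2 * a ^ 2 + 2 * r ^ 2) (h2 : a ^ 2 ≤ 2 * b ^ 2 + 2 * r ^ 2)
    (hW : 1 + (e + c * a ^ (-μ)) * r ^ 2 ≤ W) :
    b ^ 2 ≤ (4 * W) ^ (2 / (2 - μ)) * a ^ 2 ∧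
    e + c * b ^ (-μ) ≤ (4 * W) ^ (2 / (2 - μ)) * (e + c * a ^ (-μ)) := by
  have ha0 : 0 < a := by linarith
  have hb0 : 0 < b := by linarith
  have hp : 0 < a ^ (-μ) := by positivity
  have hW' : 1 + a ^ (-μ) * r ^ 2 ≤ W := by
    refine le_trans ?_ hW
    have : a ^ (-μ) ≤ e + c * a ^ (-μ) := by nlinarith
    gcongr
  have hW1 : 1 ≤ W := by
    have : 0 ≤ a ^ (-μ) * r ^ 2 := by positivity
    linarith
  have hN : 1 ≤ 2 / (2 - μ) := by
    rw [le_div_iff₀ (by linarith)]; linarith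
  have hK : 4 * W ≤ (4 * W) ^ (2 / (2 - μ)) :=
    Real.self_le_rpow_of_one_le (by linarith) hN
  have haa : a ^ (-μ) * a ^ 2 = a ^ (2 - μ) := by
    rw [← Real.rpow_natCast, ← Real.rpow_add ha0]
    congr 1
    push_cast
    ring
  have h1p : 1 ≤ a ^ (2 - μ) := Real.one_le_rpow ha (by linarith)
  set K := (4 * W) ^ (2 / (2 - μ)) with hKdef
  constructor
  · have : r ^ 2 ≤ a ^ (-μ) * r ^ 2 * a ^ 2 := by
      calc r ^ 2 = 1 * r ^ 2 := by ring
        _ ≤ a ^ (2 - μ) * r ^ 2 := by gcongr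
        _ = _ := by rw [← haa]; ring
    have h3 : (1 + a ^ (-μ) * r ^ 2) * a ^ 2 ≤ W * a ^ 2 := by gcongr
    have h4 : 4 * W * a ^ 2 ≤ K * a ^ 2 := by gcongr
    nlinarith [sq_nonneg a]
  · have key : b ^ (-μ) ≤ K * a ^ (-μ) := by
      by_cases hcase : a ≤ 2 * b
      · have h3 : (2 * b) ^ (-μ) ≤ a ^ (-μ) :=
          Real.rpow_le_rpow_of_nonpos ha0 hcase (by linarith)
        rw [Real.mul_rpow (by norm_num) hb0.le] at h3
        have h4 : (1 / 4 : ℝ) ≤ 2 ^ (-μ) := by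
          calc (1 / 4 : ℝ) = 2 ^ (-2 : ℝ) := by
                rw [Real.rpow_neg (by norm_num)]; norm_num
            _ ≤ _ := Real.rpow_le_rpow_of_exponent_le (by norm_num) (by linarith)
        have h5 : 0 < b ^ (-μ) := by positivity
        have h6 : 1 / 4 * b ^ (-μ) ≤ 2 ^ (-μ) * b ^ (-μ) := by gcongr
        have h7 : 4 * a ^ (-μ) ≤ K * a ^ (-μ) := by
          gcongr; linarith
        linarith
      · push Not at hcase
        have hra : a ^ 2 ≤ 4 * r ^ 2 := by nlinarith
        have h3 : a ^ (2 - μ) ≤ 4 * W := by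
          rw [← haa]
          have : a ^ (-μ) * a ^ 2 ≤ a ^ (-μ) * (4 * r ^ 2) := by gcongr
          linarith
        have h4 : a ^ 2 ≤ K := by
          have h5 : (a ^ (2 - μ)) ^ (2 / (2 - μ)) ≤ K :=
            Real.rpow_le_rpow (by positivity) h3 (by linarith)
          rw [← Real.rpow_mul ha0.le, mul_div_cancel₀ _ (by linarith)] at h5
          exact_mod_cast h5
        have h6 : b ^ (-μ) ≤ 1 := Real.rpow_le_one_of_one_le_of_nonpos hb (by linarith)
        have h7 : a ^ (-μ) * a ^ 2 ≤ a ^ (-μ) * K := by gcongr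
        linarith
    have h8 : c * b ^ (-μ) ≤ c * (K * a ^ (-μ)) := by gcongr
    have h9 : 1 * e ≤ K * e := by
      gcongr; linarith
    linarith

theorem div_aux (v A B K : ℝ) (hv : 0 ≤ v) (hA : 0 < A) (hB : 0 < B) (h : B ≤ K * A) :
    v / A ≤ K * (v / B) := by
  rw [← mul_div_assoc, div_le_div_iff₀ hA hB]
  nlinarith [mul_le_mul_of_nonneg_left h hv]

/-- The metric `g_E` is temperate uniformly in `E ∈ (0,1]` (Lemma 4.3 (i)). -/
theorem stmt_14 (d : ℕ) (hd : 1 ≤ d) (μ κ₀ : ℝ)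
    (hμ0 : 0 < μ) (hμ2 : μ < 2) (hκ₀ : 0 < κ₀) :
    ∃ C₂ N : ℝ, 0 < C₂ ∧ 0 < N ∧ ∀ E ∈ Set.Ioc (0:ℝ) 1,
      ∀ x y ξ η vx vξ : EuclideanSpace ℝ (Fin d),
        ‖vx‖ ^ 2 / jap x ^ 2 + ‖vξ‖ ^ 2 / fE μ κ₀ E x ^ 2 ≤
          C₂ * (‖vx‖ ^ 2 / jap y ^ 2 + ‖vξ‖ ^ 2 / fE μ κ₀ E y ^ 2) *
            (1 + fE μ κ₀ E x ^ 2 * ‖y - x‖ ^ 2 + jap x ^ 2 * ‖η - ξ‖ ^ 2) ^ N := by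
  have hcμ : 0 < 1 - μ / 2 := by linarith
  have hc : 1 ≤ (1 - μ / 2)⁻¹ := (one_le_inv₀ hcμ).2 (by linarith)
  refine ⟨4 ^ (2 / (2 - μ)), 2 / (2 - μ), by positivity, div_pos two_pos (by linarith), ?_⟩
  intro E hE x y ξ η vx vξ
  have hE0 : 0 < E := hE.1
  have hx := one_le_jap x
  have hy := one_le_jap y
  have hx0 : 0 < jap x := by linarith
  have hy0 : 0 < jap y := by linarith
  have fsq : ∀ z : EuclideanSpace ℝ (Fin d), 0 < jap z →
      fE μ κ₀ E z ^ 2 = (κ₀ ^ 2)⁻¹ * E + (1 - μ/2)⁻¹ * jap z ^ (-μ) := by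
    intro z hz
    unfold fE
    rw [Real.sq_sqrt (by positivity)]
  have fx := fsq x hx0
  have fy := fsq y hy0
  have fx0 : 0 < fE μ κ₀ E x ^ 2 := by rw [fx]; positivity
  have fy0 : 0 < fE μ κ₀ E y ^ 2 := by rw [fy]; positivity
  set W := 1 + fE μ κ₀ E x ^ 2 * ‖y - x‖ ^ 2 + jap x ^ 2 * ‖η - ξ‖ ^ 2 with hWdef
  have hW0 : 0 ≤ W := by positivity
  have h2 := jap_aux y x
  rw [norm_sub_rev] at h2
  obtain ⟨k1, k2⟩ := core_aux μ (jap x) (jap y) ‖y - x‖ ((κ₀ ^ 2)⁻¹ * E) (1 - μ/2)⁻¹ W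
    hμ0 hμ2 hx hy (norm_nonneg _) (by positivity) hc (jap_aux x y) h2 (by
      rw [← fx, hWdef]
      have : 0 ≤ jap x ^ 2 * ‖η - ξ‖ ^ 2 := by positivity
      linarith)
  rw [← fx, ← fy] at k2
  have m1 := div_aux (‖vx‖ ^ 2) _ _ _ (by positivity) (by positivity) (by positivity) k1
  have m2 := div_aux (‖vξ‖ ^ 2) _ _ _ (by positivity) fx0 fy0 k2
  rw [Real.mul_rpow (by norm_num) hW0] at m1 m2
  linarith
end
end

section
/- Let d ≥ 1, 0 < μ < 2, κ₀ > 0, and let N be any real number with N ≥ 2/(2−μ). Then there exists C̃ > 0 such that for all E ∈ (0,1] and all x, y ∈ ℝ^d: max( ⟨x⟩²/⟨y⟩² , ⟨y⟩²/⟨x⟩² ) ≤ C̃ ( 1 + f_E(x)² |x − y|² )^N. -/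
open Real

noncomputable section

/-- Formula (B.5): for any `N ≥ 2/(2-μ)` the weight ratio `⟨x⟩²/⟨y⟩²` is dominated by
`C̃(1 + f_E(x)²|x-y|²)^N`, uniformly in `E ∈ (0,1]`. -/
theorem stmt_16 (d : ℕ) (hd : 1 ≤ d) (μ κ₀ N : ℝ)
    (hμ0 : 0 < μ) (hμ2 : μ < 2) (hκ₀ : 0 < κ₀) (hN : 2 / (2 - μ) ≤ N) :
    ∃ Ct > (0:ℝ), ∀ E ∈ Set.Ioc (0:ℝ) 1, ∀ x y : EuclideanSpace ℝ (Fin d),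
      max (jap x ^ 2 / jap y ^ 2) (jap y ^ 2 / jap x ^ 2) ≤
        Ct * (1 + fE μ κ₀ E x ^ 2 * ‖x - y‖ ^ 2) ^ N := by
  have h2 : 0 < 2 - μ := by linarith
  have hp1 : 1 ≤ 2 / (2 - μ) := by rw [le_div_iff₀ h2]; linarith
  have hN1 : 1 ≤ N := hp1.trans hN
  refine ⟨4 ^ N, by positivity, ?_⟩
  rintro E ⟨hE, -⟩ x y
  have hjx : jap x ^ 2 = 1 + ‖x‖ ^ 2 := Real.sq_sqrt (by positivity)
  have hjy : jap y ^ 2 = 1 + ‖y‖ ^ 2 := Real.sq_sqrt (by positivity)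
  have hx1 : 1 ≤ jap x := by
    unfold jap; rw [Real.one_le_sqrt]; nlinarith [sq_nonneg ‖x‖]
  have hx0 : 0 < jap x := by linarith
  have hpw : 0 < jap x ^ (-μ) := Real.rpow_pos_of_pos hx0 _
  have hinv : 1 ≤ (1 - μ/2)⁻¹ := (one_le_inv₀ (by linarith)).2 (by linarith)
  have hf : jap x ^ (-μ) ≤ fE μ κ₀ E x ^ 2 := by
    have h0 : 0 ≤ (κ₀ ^ 2)⁻¹ * E := by positivity
    have h1 : jap x ^ (-μ) ≤ (1 - μ/2)⁻¹ * jap x ^ (-μ) := le_mul_of_one_le_left hpw.le hinv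
    unfold fE
    rw [Real.sq_sqrt (by linarith)]
    linarith
  have hD0 : 0 ≤ ‖x - y‖ ^ 2 := by positivity
  have hT' : jap x ^ (-μ) * ‖x - y‖ ^ 2 ≤ fE μ κ₀ E x ^ 2 * ‖x - y‖ ^ 2 :=
    mul_le_mul_of_nonneg_right hf hD0
  have t1 : ‖x‖ ^ 2 ≤ 2 * ‖y‖ ^ 2 + 2 * ‖x - y‖ ^ 2 := by
    have h : ‖x‖ ≤ ‖y‖ + ‖x - y‖ := by
      have := norm_add_le y (x - y); simpa using this
    have := norm_nonneg x
    nlinarith [sq_nonneg (‖y‖ - ‖x - y‖)]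
  have t2 : ‖y‖ ^ 2 ≤ 2 * ‖x‖ ^ 2 + 2 * ‖x - y‖ ^ 2 := by
    have h : ‖y‖ ≤ ‖x‖ + ‖x - y‖ := by
      have := norm_sub_le x (x - y); simpa using this
    have := norm_nonneg y
    nlinarith [sq_nonneg (‖x‖ - ‖x - y‖)]
  have hmul : jap x ^ 2 * jap x ^ (-μ) = jap x ^ (2 - μ) := by
    rw [← Real.rpow_natCast, ← Real.rpow_add hx0]; norm_num [sub_eq_add_neg]
  have hge1 : 1 ≤ jap x ^ 2 * jap x ^ (-μ) := by
    rw [hmul]; exact Real.one_le_rpow hx1 h2.le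
  generalize fE μ κ₀ E x ^ 2 * ‖x - y‖ ^ 2 = S at *
  generalize ‖x - y‖ ^ 2 = D at *
  have hS : 0 ≤ S := (mul_nonneg hpw.le hD0).trans hT'
  rw [← Real.mul_rpow (by norm_num) (by linarith)]
  have h4 : 1 ≤ 4 * (1 + S) := by linarith
  have hlin : 4 * (1 + S) ≤ (4 * (1 + S)) ^ N := Real.self_le_rpow_of_one_le h4 hN1
  have hx2 : 0 < jap x ^ 2 := by positivity
  have hy2 : 1 ≤ jap y ^ 2 := by rw [hjy]; nlinarith [sq_nonneg ‖y‖]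
  apply max_le
  · by_cases hc : jap x ^ 2 ≤ 4 * jap y ^ 2
    · refine le_trans ?_ hlin
      rw [div_le_iff₀ (by linarith)]
      nlinarith
    · push Not at hc
      have hDa : jap x ^ 2 ≤ 4 * D := by linarith
      have hb : jap x ^ (2 - μ) ≤ 4 * (1 + S) := by
        rw [← hmul]; nlinarith
      have hb2 : jap x ^ 2 ≤ (4 * (1 + S)) ^ (2 / (2 - μ)) := by
        have := Real.rpow_le_rpow (by positivity) hb (z := 2 / (2 - μ)) (by linarith)
        rw [← Real.rpow_mul hx0.le, mul_div_cancel₀ _ h2.ne'] at this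
        exact_mod_cast this
      calc jap x ^ 2 / jap y ^ 2 ≤ jap x ^ 2 := div_le_self hx2.le hy2
        _ ≤ _ := hb2
        _ ≤ _ := Real.rpow_le_rpow_of_exponent_le h4 hN
  · refine le_trans ?_ hlin
    rw [div_le_iff₀ hx2]
    have hDS : D ≤ S * jap x ^ 2 := by
      calc D ≤ (jap x ^ 2 * jap x ^ (-μ)) * D := le_mul_of_one_le_left hD0 hge1
        _ = (jap x ^ (-μ) * D) * jap x ^ 2 := by ring
        _ ≤ _ := mul_le_mul_of_nonneg_right hT' hx2.le
    nlinarith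
end
end
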